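/- Fix integers k ≥ 2, ℓ ≥ 1, n ≥ 2, d ≥ 1. Let L be a list of n vectors in {0,1}^d, and let v_1, …, v_k ∈ {0,1}^d. For j ∈ [0..n^ℓ−1] with base-n digits j_1, …, j_ℓ, define List(L)_ℓ[j] ∈ {0,1}^d by List(L)_ℓ[j][h] = L[j_1][h] · L[j_2][h] ⋯ L[j_ℓ][h]. For i ∈ [1..k−1], define the 0/1 sequence VecS_i of length d·n^ℓ by VecS_i[(h−1)n^ℓ + j + 1] = List(L)_ℓ[j][h] · v_i[h] for h ∈ [1..d], j ∈ [0..n^ℓ−1]; and define the 0/1 sequence Vec_E of length (d−1)n^ℓ + 1 by Vec_E[(h−1)n^ℓ + 1] = v_k[h] for h ∈ [1..d] and Vec_E[p] = 0 at all other positions p. Suppose that for each i ∈ [1..k] and b ∈ {0,1} we are given a string CG_i(b), all of one common length c over an alphabet Σ_0, and an integer z, such that for all bits b_1, …, b_k ∈ {0,1}: LCS(CG_1(b_1), …, CG_k(b_k)) = z+1 if b_1·b_2 ⋯ b_k = 0 and = z if b_1·b_2 ⋯ b_k = 1. Form the lists X_i = (CG_i(VecS_i[j]))_{j=1}^{d·n^ℓ}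 for i ∈ [1..k−1] and Y = (CG_k(Vec_E[j]))_{j=1}^{(d−1)n^ℓ+1}, and let IVG_i = SAG_i(X_i) and EIVG = SAG_y(Y), where SAG_i, SAG_y are the selected alignment gadgets built from these lists with fresh symbols $_1, …, $_k, %, @ not in Σ_0 (with parameters ℓ_str = c, n_str = d·n^ℓ, m_str = (d−1)n^ℓ+1, and D = 2c(2((d−1)n^ℓ+1) + (k−1)d·n^ℓ) + (z+1)((d−1)n^ℓ+1)). Let C = D. If there exist j_1, …, j_{k−1} ∈ [0..n^ℓ−1] such that for every h ∈ [1..d]: v_k[h] · Π_{i=1}^{k−1}(List(L)_ℓ[j_i][h] · v_i[h]) = 0, then LCS(IVG_1, …, IVG_{k−1}, EIVG) = C; otherwise LCS(IVG_1, …, IVG_{k−1}, EIVG) = C − 1. -/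

import Mathlib

/-- The length of a longest common subsequence of a family of strings. -/
noncomputable def lcsLen {α : Type*} (L : List (List α)) : ℕ :=
  sSup { m : ℕ | ∃ T : List α, T.length = m ∧ ∀ s ∈ L, T.Sublist s }

/-- `strPow W f` is the concatenation `W^f` of `f` copies of the string `W`. -/
def strPow {β : Type*} (W : List β) (f : ℕ) : List β :=
  (List.replicate f W).flatten

/-- The string `A = $₁^{2ℓ} · $₂^{2ℓ} ⋯ $_k^{2ℓ}`. -/
def gadgetA {β : Type*} (k ℓ : ℕ) (dollar : Fin k → β) : List β :=
  (List.ofFn fun j : Fin k => List.replicate (2 * ℓ) (dollar j)).flatten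

/-- The string `A₋ᵢ`: `A` with the block `$ᵢ^{2ℓ}` removed. -/
def gadgetAminus {β : Type*} (k ℓ : ℕ) (dollar : Fin k → β) (i : Fin k) : List β :=
  (List.ofFn fun j : Fin k =>
    if j = i then [] else List.replicate (2 * ℓ) (dollar j)).flatten

/-- The alignment gadget
`AG_i(X) = A₋ᵢ^f · (A · X[1] · B) · (A · X[2] · B) ⋯ (A · X[n] · B) · A₋ᵢ^f`
where `B = %^{2ℓ}`. -/
def gadgetAG {β : Type*} (k ℓ : ℕ) (dollar : Fin k → β) (percent : β)
    (i : Fin k) (f : ℕ) {n : ℕ} (X : Fin n → List β) : List β :=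
  strPow (gadgetAminus k ℓ dollar i) f ++
    (List.ofFn fun j : Fin n =>
      gadgetA k ℓ dollar ++ X j ++ List.replicate (2 * ℓ) percent).flatten ++
    strPow (gadgetAminus k ℓ dollar i) f

/-- The selected alignment gadget `SAG_i(X) = @^{D−1} · AG_i(X)`. -/
def gadgetSAGx {β : Type*} (k ℓ : ℕ) (dollar : Fin k → β) (percent atSym : β)
    (D : ℕ) (i : Fin k) (f : ℕ) {n : ℕ} (X : Fin n → List β) : List β :=
  List.replicate (D - 1) atSym ++ gadgetAG k ℓ dollar percent i f X

/-- The selected alignment gadget `SAG_y(Y) = AG_y(Y) · @^{D−1}`. -/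
def gadgetSAGy {β : Type*} (k ℓ : ℕ) (dollar : Fin k → β) (percent atSym : β)
    (D : ℕ) (i : Fin k) (f : ℕ) {m : ℕ} (Y : Fin m → List β) : List β :=
  gadgetAG k ℓ dollar percent i f Y ++ List.replicate (D - 1) atSym


/-- `listLProd n d ℓ hn L j h` is the `h`-th coordinate of the vector `List(L)_ℓ[j]`:
the product (conjunction) `L[j₁][h] ⋯ L[j_ℓ][h]` over the base-`n` digits `j₁, …, j_ℓ`
of `j`. -/
def listLProd (n d ℓ : ℕ) (hn : 0 < n) (L : Fin n → Fin d → Bool)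
    (j : ℕ) (h : Fin d) : Bool :=
  decide (∀ x < ℓ, L ⟨j / n ^ x % n, Nat.mod_lt _ hn⟩ h = true)

/-- The 0/1 sequence `VecS_i` (0-indexed): at position `p = (h−1)·n^ℓ + j` its value is
`List(L)_ℓ[j][h] · vᵢ[h]`. -/
def vecS (n d ℓ : ℕ) (hn : 0 < n) (L : Fin n → Fin d → Bool)
    (vi : Fin d → Bool) (p : ℕ) : Bool :=
  if h : p / n ^ ℓ < d then
    listLProd n d ℓ hn L (p % n ^ ℓ) ⟨p / n ^ ℓ, h⟩ && vi ⟨p / n ^ ℓ, h⟩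
  else false

/-- The 0/1 sequence `Vec_E` (0-indexed): at position `p = (h−1)·n^ℓ` its value is `v_k[h]`,
and it is `0` at all other positions. -/
def vecE (n d ℓ : ℕ) (vk : Fin d → Bool) (p : ℕ) : Bool :=
  if h : p / n ^ ℓ < d then
    (if p % n ^ ℓ = 0 then vk ⟨p / n ^ ℓ, h⟩ else false)
  else false

/-- Concatenation of the first `n` strings of a sequence. -/
def catN {β : Type*} (F : ℕ → List β) : ℕ → List β
  | 0 => []
  | n + 1 => catN F n ++ F n

theorem catN_add {β : Type*} (F : ℕ → List β) (a b : ℕ) :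
    catN F (a + b) = catN F a ++ catN (fun x => F (a + x)) b := by
  induction b with
  | zero => simp [catN]
  | succ b ih => rw [← Nat.add_assoc, catN, ih, catN, List.append_assoc]

theorem catN_mono {β : Type*} (F G : ℕ → List β) (n : ℕ) (h : ∀ p < n, (F p).Sublist (G p)) :
    (catN F n).Sublist (catN G n) := by
  induction n with
  | zero => simp [catN]
  | succ n ih =>
    exact (ih fun p hp => h p (by omega)).append (h n (by omega))

theorem catN_sub_le {β : Type*} (F : ℕ → List β) {a b : ℕ} (h : a ≤ b) :
    (catN F a).Sublist (catN F b) := by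
  obtain ⟨x, rfl⟩ := Nat.exists_eq_add_of_le h
  rw [catN_add]
  exact List.sublist_append_left _ _

theorem mem_catN {β : Type*} {F : ℕ → List β} {n : ℕ} {x : β} (h : x ∈ catN F n) :
    ∃ p < n, x ∈ F p := by
  induction n with
  | zero => simp [catN] at h
  | succ n ih =>
    rw [catN, List.mem_append] at h
    rcases h with h | h
    · obtain ⟨p, hp, hx⟩ := ih h
      exact ⟨p, by omega, hx⟩
    · exact ⟨n, by omega, h⟩

theorem catN_length {β : Type*} (F : ℕ → List β) (n : ℕ) :
    (catN F n).length = ∑ p ∈ Finset.range n, (F p).length := by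
  induction n with
  | zero => simp [catN]
  | succ n ih => rw [catN, List.length_append, ih, Finset.sum_range_succ]

theorem catN_count {β : Type*} [DecidableEq β] (F : ℕ → List β) (n : ℕ) (x : β) :
    (catN F n).count x = ∑ p ∈ Finset.range n, (F p).count x := by
  induction n with
  | zero => simp [catN]
  | succ n ih => rw [catN, List.count_append, ih, Finset.sum_range_succ]

theorem ofFn_flatten_eq_catN {β : Type*} (g : ℕ → List β) (n : ℕ) :
    (List.ofFn (fun j : Fin n => g j)).flatten = catN g n := by
  induction n with
  | zero => simp [catN]
  | succ n ih =>
    rw [List.ofFn_succ', List.concat_eq_append, List.flatten_append, catN]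
    simp [← ih]

theorem strPow_eq_catN {β : Type*} (W : List β) (f : ℕ) : strPow W f = catN (fun _ => W) f := by
  unfold strPow
  induction f with
  | zero => simp [catN]
  | succ n ih => rw [List.replicate_succ', List.flatten_append, ih, catN]; simp

/-- Splitting a subsequence of a concatenation. -/
theorem sublist_catN {β : Type*} (F : ℕ → List β) (n : ℕ) (T : List β) (h : T.Sublist (catN F n)) :
    ∃ G : ℕ → List β, T = catN G n ∧ ∀ p < n, (G p).Sublist (F p) := by
  induction n generalizing T with
  | zero => exact ⟨fun _ => [], by simpa [catN] using h, by simp⟩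
  | succ n ih =>
    rw [catN, List.sublist_append_iff] at h
    obtain ⟨l₁, l₂, rfl, h1, h2⟩ := h
    obtain ⟨G, rfl, hG⟩ := ih _ h1
    refine ⟨fun p => if p = n then l₂ else G p, ?_, ?_⟩
    · have : ∀ m ≤ n, catN (fun p => if p = n then l₂ else G p) m = catN G m := by
        intro m hm
        induction m with
        | zero => rfl
        | succ m ihm => rw [catN, catN, ihm (by omega), if_neg (by omega)]
      rw [catN, this n le_rfl, if_pos rfl]
    · intro p hp
      by_cases hpn : p = n
      · simpa [hpn] using h2
      · simpa [hpn] using hG p (by omega)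

/-- Splitting the host string along a concatenated subsequence. -/
theorem catN_sublist {β : Type*} (G : ℕ → List β) (n : ℕ) (R : List β) (h : (catN G n).Sublist R) :
    ∃ (r : List β) (F : ℕ → List β), R = r ++ catN F n ∧ ∀ p < n, (G p).Sublist (F p) := by
  induction n generalizing R with
  | zero => exact ⟨R, fun _ => [], by simp [catN], by simp⟩
  | succ n ih =>
    rw [catN, List.append_sublist_iff] at h
    obtain ⟨r₁, r₂, rfl, h1, h2⟩ := h
    obtain ⟨r, F, rfl, hF⟩ := ih _ h1
    refine ⟨r, fun p => if p = n then r₂ else F p, ?_, ?_⟩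
    · have : ∀ m ≤ n, catN (fun p => if p = n then r₂ else F p) m = catN F m := by
        intro m hm
        induction m with
        | zero => rfl
        | succ m ihm => rw [catN, catN, ihm (by omega), if_neg (by omega)]
      rw [catN, this n le_rfl, if_pos rfl, List.append_assoc]
    · intro p hp
      by_cases hpn : p = n
      · simpa [hpn] using h2
      · simpa [hpn] using hF p (by omega)

theorem le_lcsLen {β : Type*} (L : List (List β)) (hL : L ≠ []) (T : List β)
    (h : ∀ s ∈ L, T.Sublist s) : T.length ≤ lcsLen L := by
  unfold lcsLen
  refine le_csSup ?_ ⟨T, rfl, h⟩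
  obtain ⟨s, hs⟩ := List.exists_mem_of_ne_nil L hL
  refine ⟨s.length, ?_⟩
  rintro m ⟨T', rfl, hT'⟩
  exact (hT' s hs).length_le

theorem exists_lcs {β : Type*} (L : List (List β)) (hL : L ≠ []) :
    ∃ T : List β, T.length = lcsLen L ∧ ∀ s ∈ L, T.Sublist s := by
  have : lcsLen L ∈ { m : ℕ | ∃ T : List β, T.length = m ∧ ∀ s ∈ L, T.Sublist s } := by
    unfold lcsLen
    refine Nat.sSup_mem ⟨0, [], rfl, by simp⟩ ?_
    obtain ⟨s, hs⟩ := List.exists_mem_of_ne_nil L hL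
    refine ⟨s.length, ?_⟩
    rintro m ⟨T', rfl, hT'⟩
    exact (hT' s hs).length_le
  exact this

/-- Cutting `Z · $^m · E` at a factor `r` with fewer than `m` symbols `$`. -/
theorem cut_lemma {β : Type*} [DecidableEq β] (x : β) (m : ℕ) (Z E u r w t : List β)
    (heq : Z ++ List.replicate m x ++ E = u ++ r ++ w) (hr : r.count x < m)
    (ht : t.Sublist r) (htx : x ∉ t) (hne : t ≠ []) (hE : x ∉ E) :
    (∃ r' w', Z = u ++ r' ++ w' ∧ t.Sublist r' ∧ r'.count x ≤ r.count x) ∨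
    (t.Sublist E ∧ u.count x ≤ Z.count x + m ∧ Z.count x + m ≤ u.count x + r.count x) := by
  have hrep : ∀ a b : List β, (a ++ b).Sublist (List.replicate m x) → 
      a = List.replicate a.length x ∧ b = List.replicate b.length x := by
    intro a b h
    have h' := fun y hy => List.eq_of_mem_replicate (h.subset (a := y) hy)
    exact ⟨List.eq_replicate_iff.2 ⟨rfl, fun y hy => h' y (by simp [hy])⟩,
      List.eq_replicate_iff.2 ⟨rfl, fun y hy => h' y (by simp [hy])⟩⟩
  have hcE : E.count x = 0 := List.count_eq_zero.2 hE
  have hfil : ∀ s a b : List β, s.Sublist (a ++ b) → x ∉ s → (∀ y ∈ a, y = x) → s.Sublist b := by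
    intro s a b h hs ha
    obtain ⟨s1, s2, rfl, h1, h2⟩ := List.sublist_append_iff.1 h
    have : s1 = [] := List.eq_nil_iff_forall_not_mem.2 fun y hy => by
      have := ha y (h1.subset hy); subst this; simp [hy] at hs
    subst this; simpa using h2
  have hfil' : ∀ s a b : List β, s.Sublist (a ++ b) → x ∉ s → (∀ y ∈ b, y = x) → s.Sublist a := by
    intro s a b h hs ha
    obtain ⟨s1, s2, rfl, h1, h2⟩ := List.sublist_append_iff.1 h
    have : s2 = [] := List.eq_nil_iff_forall_not_mem.2 fun y hy => by
      have := ha y (h2.subset hy); subst this; simp [hy] at hs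
    subst this; simpa using h1
  rw [List.append_assoc, List.append_assoc] at heq
  rcases List.append_eq_append_iff.1 heq with ⟨a, rfl, h2⟩ | ⟨a, rfl, h2⟩
  · -- u = Z ++ a
    right
    rcases List.append_eq_append_iff.1 h2 with ⟨b, rfl, h3⟩ | ⟨b, h3, h4⟩
    · have hs : r.Sublist E := by rw [h3]; exact (List.sublist_append_left _ _).trans (List.sublist_append_right _ _)
      have hb : b.count x = 0 := by
        rw [h3] at hcE; rw [List.count_append] at hcE; omega
      exact ⟨ht.trans hs, by simp [hb], by simp; omega⟩
    · obtain ⟨ha, hb⟩ := hrep a b (by rw [← h3])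
      have hb' : ∀ y ∈ b, y = x := fun y hy => List.eq_of_mem_replicate (hb ▸ hy)
      have hcnt := congrArg (List.count x) h3
      rw [List.count_replicate_self, List.count_append] at hcnt
      have hbl : b.count x ≤ m := by omega
      rcases List.append_eq_append_iff.1 h4 with ⟨e, rfl, h5⟩ | ⟨e, rfl, h5⟩
      · exfalso
        apply hne
        have := hfil t (r ++ e) [] (by simpa using ht.trans (List.sublist_append_left _ _)) htx hb'
        simpa using this
      · refine ⟨?_, ?_, ?_⟩
        · have := hfil t b e ht htx hb'
          rw [h5]
          exact this.trans (List.sublist_append_left _ _)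
        · simp [List.count_append]; omega
        · simp [List.count_append]; omega
  · -- Z = u ++ a
    left
    rcases List.append_eq_append_iff.1 h2 with ⟨b, rfl, h3⟩ | ⟨b, rfl, h3⟩
    · exact ⟨r, b, by simp, ht, le_rfl⟩
    · -- r = a ++ b
      refine ⟨a, [], by simp, ?_, by simp⟩
      rcases List.append_eq_append_iff.1 h3 with ⟨e, rfl, h4⟩ | ⟨e, h4, h5⟩
      · exfalso
        simp [List.count_append] at hr
        omega
      · obtain ⟨hb, _⟩ := hrep b e (by rw [← h4])
        have hball : ∀ y ∈ b, y = x := fun y hy => List.eq_of_mem_replicate (hb ▸ hy)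
        exact hfil' t a b ht htx hball

/-- Locating a piece of a common subsequence inside one block of the alignment gadget. -/
theorem locate {β : Type*} [DecidableEq β] (Sig : Set β) (x : β) (m : ℕ)
    (Pre A₁ A₂ B : List β) (X : ℕ → List β)
    (hPre : ∀ y ∈ Pre, y ∉ Sig ∧ y ≠ x) (hA₁ : ∀ y ∈ A₁, y ∉ Sig ∧ y ≠ x)
    (hA₂ : ∀ y ∈ A₂, y ∉ Sig ∧ y ≠ x) (hB : ∀ y ∈ B, y ∉ Sig ∧ y ≠ x)
    (hX : ∀ p, x ∉ X p) (t : List β) (htx : x ∉ t) (htS : ∃ y ∈ t, y ∈ Sig)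
    (N : ℕ) (H : List β) (hH : ∀ y ∈ H, y ∉ Sig ∧ y ≠ x) (u r w : List β)
    (heq : Pre ++ catN (fun q => (A₁ ++ List.replicate m x ++ A₂) ++ X q ++ B) N ++ H = u ++ r ++ w)
    (hr : r.count x < m) (ht : t.Sublist r) :
    ∃ q < N, (∃ G H', (∀ y ∈ G, y ∉ Sig) ∧ (∀ y ∈ H', y ∉ Sig) ∧ t.Sublist (G ++ X q ++ H')) ∧
      u.count x ≤ m * (q + 1) ∧ m * (q + 1) ≤ u.count x + r.count x := by
  have hc0 : ∀ l : List β, (∀ y ∈ l, y ∉ Sig ∧ y ≠ x) → l.count x = 0 := fun l hl =>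
    List.count_eq_zero.2 fun h => (hl x h).2 rfl
  induction N generalizing H r w with
  | zero =>
    exfalso
    obtain ⟨y, hy, hyS⟩ := htS
    have : y ∈ Pre ++ catN (fun q => (A₁ ++ List.replicate m x ++ A₂) ++ X q ++ B) 0 ++ H := by
      rw [heq]; simp [ht.subset hy]
    simp [catN] at this
    rcases this with h | h
    · exact (hPre y h).1 hyS
    · exact (hH y h).1 hyS
  | succ N ih =>
    have heq' : (Pre ++ catN (fun q => (A₁ ++ List.replicate m x ++ A₂) ++ X q ++ B) N ++ A₁) ++
        List.replicate m x ++ (A₂ ++ X N ++ (B ++ H)) = u ++ r ++ w := by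
      rw [← heq, catN]; simp only [List.append_assoc]
    have hE : x ∉ (A₂ ++ X N ++ (B ++ H)) := by
      simp only [List.mem_append, not_or]
      exact ⟨⟨fun h => (hA₂ x h).2 rfl, hX N⟩, fun h => (hB x h).2 rfl, fun h => (hH x h).2 rfl⟩
    have hne : t ≠ [] := by rintro rfl; simp at htS
    have hZ : (Pre ++ catN (fun q => (A₁ ++ List.replicate m x ++ A₂) ++ X q ++ B) N ++ A₁).count x
        = m * N := by
      simp only [List.count_append, catN_count, hc0 _ hPre, hc0 _ hA₁, hc0 _ hA₂, hc0 _ hB,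
        List.count_replicate_self, List.count_eq_zero.2 (hX _)]
      simp [mul_comm]
    rcases cut_lemma x m _ _ u r w t heq' hr ht htx hne hE with ⟨r', w', h1, h2, h3⟩ | ⟨h1, h2, h3⟩
    · obtain ⟨q, hq, hq1, hq2, hq3⟩ := ih A₁ hA₁ r' w' h1 (by omega) h2
      exact ⟨q, by omega, hq1, hq2, by omega⟩
    · rw [hZ] at h2 h3
      refine ⟨N, by omega, ⟨A₂, B ++ H, fun y hy => (hA₂ y hy).1, ?_, h1⟩, ?_, ?_⟩
      · intro y hy
        rcases List.mem_append.1 hy with h | h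
        · exact (hB y h).1
        · exact (hH y h).1
      · rw [mul_add]; omega
      · rw [mul_add]; omega

theorem sig_sublist {β : Type*} (Sig : Set β) (t G X H : List β) (hG : ∀ y ∈ G, y ∉ Sig)
    (hH : ∀ y ∈ H, y ∉ Sig) (ht : ∀ y ∈ t, y ∈ Sig) (h : t.Sublist (G ++ X ++ H)) :
    t.Sublist X := by
  obtain ⟨s1, s3, rfl, h1, h3⟩ := List.sublist_append_iff.1 h
  obtain ⟨s1, s2, rfl, h1, h2⟩ := List.sublist_append_iff.1 h1
  have e1 : s1 = [] := List.eq_nil_iff_forall_not_mem.2 fun y hy =>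
    hG y (h1.subset hy) (ht y (by simp [hy]))
  have e3 : s3 = [] := List.eq_nil_iff_forall_not_mem.2 fun y hy =>
    hH y (h3.subset hy) (ht y (by simp [hy]))
  subst e1 e3
  simpa using h2

theorem sandwich_false {β : Type*} (Sig : Set β) (a b e : β) (G X H : List β)
    (hG : ∀ y ∈ G, y ∉ Sig) (hH : ∀ y ∈ H, y ∉ Sig) (ha : a ∈ Sig) (he : e ∈ Sig)
    (hb : b ∉ X) (h : [a, b, e].Sublist (G ++ X ++ H)) : False := by
  obtain ⟨s1, s3, hs, h1, h3⟩ := List.sublist_append_iff.1 h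
  have e3 : s3 = [] := by
    rcases List.eq_nil_or_concat s3 with h | ⟨l, y, rfl⟩
    · exact h
    · exfalso
      have hs' := congrArg List.getLast? hs
      simp at hs'
      exact hH y (h3.subset (by simp)) (hs' ▸ he)
  subst e3
  simp at hs
  subst hs
  obtain ⟨s1, s2, hs, h1, h2⟩ := List.sublist_append_iff.1 h1
  cases s1 with
  | nil => simp at hs; subst hs; exact hb (h2.subset (by simp))
  | cons y l =>
    simp at hs
    exact hG y (h1.subset (by simp)) (hs.1 ▸ ha)

theorem align_split {β : Type*} (M : ℕ) (P S W : List β) (a t b : ℕ → List β)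
    (h : (P ++ catN (fun p => a p ++ t p ++ b p) M ++ S).Sublist W) :
    ∃ (rP rS : List β) (ra rt rb : ℕ → List β),
      W = rP ++ catN (fun p => ra p ++ rt p ++ rb p) M ++ rS ∧ P.Sublist rP ∧ S.Sublist rS ∧
      ∀ p < M, (a p).Sublist (ra p) ∧ (t p).Sublist (rt p) ∧ (b p).Sublist (rb p) := by
  obtain ⟨r1, rS, rfl, h1, hS⟩ := List.append_sublist_iff.1 h
  obtain ⟨rP, r2, rfl, hP, h2⟩ := List.append_sublist_iff.1 h1
  obtain ⟨r, F, rfl, hF⟩ := catN_sublist _ _ _ h2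
  have : ∀ p, ∃ x : List β × List β × List β, p < M → F p = x.1 ++ x.2.1 ++ x.2.2 ∧
      (a p).Sublist x.1 ∧ (t p).Sublist x.2.1 ∧ (b p).Sublist x.2.2 := by
    intro p
    by_cases hp : p < M
    · obtain ⟨r12, r3, e, h12, h3⟩ := List.append_sublist_iff.1 (hF p hp)
      obtain ⟨q1, q2, rfl, g1, g2⟩ := List.append_sublist_iff.1 h12
      exact ⟨(q1, q2, r3), fun _ => ⟨e, g1, g2, h3⟩⟩
    · exact ⟨([], [], []), fun h => absurd h hp⟩
  choose x hx using this
  refine ⟨rP ++ r, rS, fun p => (x p).1, fun p => (x p).2.1, fun p => (x p).2.2, ?_,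
    hP.trans (List.sublist_append_left _ _), hS, fun p hp => (hx p hp).2⟩
  have : ∀ m ≤ M, catN F m = catN (fun p => (x p).1 ++ (x p).2.1 ++ (x p).2.2) m := by
    intro m hm
    induction m with
    | zero => rfl
    | succ m ihm => rw [catN, catN, ihm (by omega), (hx m (by omega)).1]
  rw [this M le_rfl]
  simp only [List.append_assoc]

/-- Facts about one string of the alignment. -/
theorem string_facts {β : Type*} [DecidableEq β] (Sig : Set β) (x pct : β) (m : ℕ) (hm : 0 < m)
    (Pre Post A₁ A₂ B : List β) (X : ℕ → List β)
    (hPre : ∀ y ∈ Pre, y ∉ Sig ∧ y ≠ x) (hPost : ∀ y ∈ Post, y ∉ Sig ∧ y ≠ x)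
    (hA₁ : ∀ y ∈ A₁, y ∉ Sig ∧ y ≠ x)
    (hA₂ : ∀ y ∈ A₂, y ∉ Sig ∧ y ≠ x) (hB : ∀ y ∈ B, y ∉ Sig ∧ y ≠ x)
    (hxS : x ∉ Sig) (hpS : pct ∉ Sig) (hpx : pct ≠ x)
    (hX : ∀ p, ∀ y ∈ X p, y ∈ Sig) (N M : ℕ) (hM : 0 < M) (P S : List β) (a t b : ℕ → List β)
    (htS : ∀ p < M, ∀ y ∈ t p, y ∈ Sig) (ha : ∀ p < M, (a p).count x ≤ m)
    (hb : ∀ p < M, (b p).count x = 0)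
    (h : (P ++ catN (fun p => a p ++ t p ++ b p) M ++ S).Sublist
      (Pre ++ catN (fun q => (A₁ ++ List.replicate m x ++ A₂) ++ X q ++ B) N ++ Post)) :
    ∃ e : ℕ → ℕ,
      ((P ++ catN (fun p => a p ++ t p ++ b p) M ++ S).count x + ∑ p ∈ Finset.range M, e p
        ≤ m * N) ∧
      (∀ p < M, e p < m → t p ≠ [] → ∃ q < N, (t p).Sublist (X q)) ∧
      ((P ++ catN (fun p => a p ++ t p ++ b p) M ++ S).count x = m * N →
        (∀ p < M, t p ≠ [] ∧ pct ∈ b p) →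
        ∃ s, s + M ≤ N ∧ ∀ p < M, (t p).Sublist (X (s + p))) := by
  have hc0 : ∀ l : List β, (∀ y ∈ l, y ∉ Sig ∧ y ≠ x) → l.count x = 0 := fun l hl =>
    List.count_eq_zero.2 fun h => (hl x h).2 rfl
  have hXx : ∀ p, x ∉ X p := fun p h => hxS (hX p x h)
  have hW : (Pre ++ catN (fun q => (A₁ ++ List.replicate m x ++ A₂) ++ X q ++ B) N ++ Post).count x
      = m * N := by
    simp only [List.count_append, catN_count, hc0 _ hPre, hc0 _ hPost, hc0 _ hA₁, hc0 _ hA₂,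
      hc0 _ hB, List.count_replicate_self, List.count_eq_zero.2 (hXx _)]
    simp [mul_comm]
  obtain ⟨rP, rS, ra, rt, rb, hdec, hrP, hrS, hsub⟩ := align_split M P S _ a t b h
  have htx : ∀ p < M, x ∉ t p := fun p hp h => hxS (htS p hp x h)
  have hW2 := hW
  rw [hdec] at hW2
  simp only [List.count_append, catN_count] at hW2
  have hT : (P ++ catN (fun p => a p ++ t p ++ b p) M ++ S).count x =
      P.count x + ∑ p ∈ Finset.range M, (a p).count x + S.count x := by
    simp only [List.count_append, catN_count]
    congr 2
    refine Finset.sum_congr rfl fun p hp => ?_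
    have hp := Finset.mem_range.1 hp
    rw [hb p hp, List.count_eq_zero.2 (htx p hp)]
    rfl
  have hPc := hrP.count_le x
  have hSc := hrS.count_le x
  have hac : ∀ p < M, (a p).count x ≤ (ra p).count x := fun p hp => (hsub p hp).1.count_le x
  simp only [Finset.sum_add_distrib] at hW2
  have hasum : ∑ p ∈ Finset.range M, (a p).count x ≤ ∑ p ∈ Finset.range M, (ra p).count x :=
    Finset.sum_le_sum fun p hp => hac p (Finset.mem_range.1 hp)
  -- prefixes
  set u : ℕ → List β := fun p => rP ++ catN (fun p => ra p ++ rt p ++ rb p) p ++ ra p with hu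
  have hfac : ∀ p < M, ∃ w, Pre ++ catN (fun q => (A₁ ++ List.replicate m x ++ A₂) ++ X q ++ B) N
      ++ Post = u p ++ rt p ++ w := by
    intro p hp
    obtain ⟨j, rfl⟩ : ∃ j, M = p + 1 + j := ⟨M - (p + 1), by omega⟩
    rw [hdec, catN_add, catN, hu]
    simp only [List.append_assoc]
    exact ⟨_, rfl⟩
  have hfac2 : ∀ p, p + 1 < M → ∃ w,
      Pre ++ catN (fun q => (A₁ ++ List.replicate m x ++ A₂) ++ X q ++ B) N
      ++ Post = u p ++ (rt p ++ rb p ++ ra (p + 1) ++ rt (p + 1)) ++ w := by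
    intro p hp
    obtain ⟨j, rfl⟩ : ∃ j, M = p + 1 + 1 + j := ⟨M - (p + 1 + 1), by omega⟩
    rw [hdec, catN_add, catN, catN, hu]
    simp only [List.append_assoc]
    exact ⟨_, rfl⟩
  have hloc : ∀ p < M, (rt p).count x < m → t p ≠ [] → ∃ q < N, (t p).Sublist (X q) ∧
      (u p).count x ≤ m * (q + 1) ∧ m * (q + 1) ≤ (u p).count x + (rt p).count x := by
    intro p hp hlt hne
    obtain ⟨w, hw⟩ := hfac p hp
    obtain ⟨y, hy⟩ := List.exists_mem_of_ne_nil _ hne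
    obtain ⟨q, hq, ⟨G, H', hG, hH', hs⟩, h1, h2⟩ := locate Sig x m Pre A₁ A₂ B X hPre hA₁ hA₂ hB hXx
      (t p) (htx p hp) ⟨y, hy, htS p hp y hy⟩ N Post hPost _ _ _ hw hlt (hsub p hp).2.1
    exact ⟨q, hq, sig_sublist Sig _ _ _ _ hG hH' (htS p hp) hs, h1, h2⟩
  refine ⟨fun p => (rt p).count x, ?_, ?_, ?_⟩
  · rw [hT]; beta_reduce; omega
  · intro p hp hlt hne
    obtain ⟨q, hq, hs, _⟩ := hloc p hp hlt hne
    exact ⟨q, hq, hs⟩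
  · intro htight hall
    rw [hT] at htight
    have hrt0 : ∑ p ∈ Finset.range M, (rt p).count x = 0 := by omega
    have hrb0 : ∑ p ∈ Finset.range M, (rb p).count x = 0 := by omega
    have hraeq : ∑ p ∈ Finset.range M, (a p).count x = ∑ p ∈ Finset.range M, (ra p).count x := by
      omega
    have hrt : ∀ p < M, (rt p).count x = 0 := fun p hp =>
      Finset.sum_eq_zero_iff.1 hrt0 p (Finset.mem_range.2 hp)
    have hrb : ∀ p < M, (rb p).count x = 0 := fun p hp =>
      Finset.sum_eq_zero_iff.1 hrb0 p (Finset.mem_range.2 hp)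
    have hra : ∀ p < M, (a p).count x = (ra p).count x := fun p hp =>
      (Finset.sum_eq_sum_iff_of_le fun p hp => hac p (Finset.mem_range.1 hp)).1 hraeq p
        (Finset.mem_range.2 hp)
    have hstep : ∀ p, p + 1 < M → (u (p + 1)).count x = (u p).count x + m := by
      intro p hp
      have e1 : (u (p + 1)).count x = (u p).count x + (ra (p + 1)).count x := by
        simp only [hu, catN, List.count_append, hrt p (by omega), hrb p (by omega)]
        omega
      have hle : (ra (p + 1)).count x ≤ m := by rw [← hra _ hp]; exact ha _ hp
      have hge : m ≤ (ra (p + 1)).count x := by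
        by_contra hlt
        obtain ⟨w, hw⟩ := hfac2 p hp
        obtain ⟨y1, hy1⟩ := List.exists_mem_of_ne_nil _ (hall p (by omega)).1
        obtain ⟨y2, hy2⟩ := List.exists_mem_of_ne_nil _ (hall (p + 1) hp).1
        have hy1S := htS p (by omega) y1 hy1
        have hy2S := htS _ hp y2 hy2
        have hsubl : [y1, pct, y2].Sublist (rt p ++ rb p ++ ra (p + 1) ++ rt (p + 1)) := by
          have q1 : [y1].Sublist (rt p) :=
            (List.singleton_sublist.2 hy1).trans (hsub p (by omega)).2.1
          have q2 : [pct].Sublist (rb p) :=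
            (List.singleton_sublist.2 (hall p (by omega)).2).trans (hsub p (by omega)).2.2
          have q3 : [y2].Sublist (rt (p + 1)) :=
            (List.singleton_sublist.2 hy2).trans (hsub _ hp).2.1
          exact ((q1.append q2).append (List.nil_sublist (ra (p + 1)))).append q3
        have hnx : x ∉ [y1, pct, y2] := by
          simp only [List.mem_cons, List.not_mem_nil, or_false, not_or]
          exact ⟨fun h => hxS (h ▸ hy1S), fun h => hpx h.symm, fun h => hxS (h ▸ hy2S)⟩
        obtain ⟨q, hq, ⟨G, H', hG, hH', hs⟩, _⟩ := locate Sig x m Pre A₁ A₂ B X hPre hA₁ hA₂ hB hXx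
          [y1, pct, y2] hnx ⟨y1, by simp, hy1S⟩ N Post hPost _ _ _ hw
          (by simp only [List.count_append, hrt p (by omega), hrb p (by omega), hrt _ hp]; omega)
          hsubl
        exact sandwich_false Sig y1 pct y2 G (X q) H' hG hH' hy1S hy2S
          (fun h => hpS (hX q _ h)) hs
      omega
    have hup : ∀ p < M, (u p).count x = (u 0).count x + m * p := by
      intro p hp
      induction p with
      | zero => simp
      | succ p ihp => rw [hstep p hp, ihp (by omega), mul_add, mul_one, add_assoc]
    obtain ⟨s, hs, _, h1, h2⟩ := hloc 0 hM (by rw [hrt 0 hM]; exact hm) (hall 0 hM).1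
    rw [hrt 0 hM] at h2
    have hs0 : (u 0).count x = m * (s + 1) := by omega
    have hq : ∀ p < M, s + p < N ∧ (t p).Sublist (X (s + p)) := by
      intro p hp
      obtain ⟨q, hq, hsq, h1, h2⟩ := hloc p hp (by rw [hrt p hp]; exact hm) (hall p hp).1
      rw [hrt p hp] at h2
      have : m * (q + 1) = m * (s + 1 + p) := by
        rw [mul_add m (s + 1) p, ← hs0, ← hup p hp]; omega
      have : q = s + p := by
        have := Nat.eq_of_mul_eq_mul_left hm this
        omega
      subst this
      exact ⟨hq, hsq⟩
    refine ⟨s, ?_, fun p hp => (hq p hp).2⟩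
    have := (hq (M - 1) (by omega)).1
    omega

/-- The word of `$`-blocks with indices in `S`. -/
def dolW {β : Type*} (k c : ℕ) (dollar : Fin k → β) (S : Fin k → Prop) [DecidablePred S] : List β :=
  (List.ofFn fun j : Fin k => if S j then List.replicate (2 * c) (dollar j) else []).flatten

theorem gadgetA_eq {β : Type*} (k c : ℕ) (dollar : Fin k → β) :
    gadgetA k c dollar = dolW k c dollar (fun _ => True) := by
  simp [gadgetA, dolW]

theorem gadgetAminus_eq {β : Type*} (k c : ℕ) (dollar : Fin k → β) (i : Fin k) :
    gadgetAminus k c dollar i = dolW k c dollar (fun j => ¬ j = i) := by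
  simp [gadgetAminus, dolW]

theorem mem_dolW {β : Type*} {k c : ℕ} {dollar : Fin k → β} {S : Fin k → Prop} [DecidablePred S]
    {x : β} (h : x ∈ dolW k c dollar S) : ∃ j, S j ∧ x = dollar j := by
  simp only [dolW, List.mem_flatten, List.mem_ofFn] at h
  obtain ⟨l, ⟨j, rfl⟩, hx⟩ := h
  by_cases hj : S j
  · rw [if_pos hj] at hx
    exact ⟨j, hj, List.eq_of_mem_replicate hx⟩
  · simp [hj] at hx

theorem ofFn_flatten_mono {β : Type*} (k : ℕ) (F G : Fin k → List β)
    (h : ∀ j, (F j).Sublist (G j)) : (List.ofFn F).flatten.Sublist (List.ofFn G).flatten := by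
  induction k with
  | zero => simp
  | succ k ih =>
    rw [List.ofFn_succ, List.ofFn_succ, List.flatten_cons, List.flatten_cons]
    exact (h 0).append (ih _ _ fun j => h j.succ)

theorem dolW_mono {β : Type*} (k c : ℕ) (dollar : Fin k → β) (S S' : Fin k → Prop)
    [DecidablePred S] [DecidablePred S'] (h : ∀ j, S j → S' j) :
    (dolW k c dollar S).Sublist (dolW k c dollar S') := by
  apply ofFn_flatten_mono
  intro j
  by_cases hj : S j
  · simp [hj, h j hj]
  · simp [hj]

theorem dolW_length {β : Type*} (k c : ℕ) (dollar : Fin k → β) (S : Fin k → Prop)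
    [DecidablePred S] :
    (dolW k c dollar S).length = ∑ j, if S j then 2 * c else 0 := by
  simp only [dolW, List.length_flatten, List.map_ofFn, List.sum_ofFn]
  refine Finset.sum_congr rfl fun j _ => ?_
  by_cases hj : S j <;> simp [hj]

theorem gadgetA_split {β : Type*} (k c : ℕ) (dollar : Fin k → β)
    (i : Fin k) : ∃ A₁ A₂, gadgetA k c dollar = A₁ ++ List.replicate (2 * c) (dollar i) ++ A₂ ∧
      (∀ y ∈ A₁, ∃ j, y = dollar j ∧ j ≠ i) ∧ (∀ y ∈ A₂, ∃ j, y = dollar j ∧ j ≠ i) := by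
  obtain ⟨s, t, hst⟩ := List.append_of_mem (List.mem_finRange i)
  have hnd := List.nodup_finRange k
  rw [hst] at hnd
  have hs : i ∉ s := fun h => (List.nodup_append.1 hnd).2.2 i h i (by simp) rfl
  have ht : i ∉ t := (List.nodup_cons.1 (List.nodup_append.1 hnd).2.1).1
  refine ⟨(s.map fun j => List.replicate (2 * c) (dollar j)).flatten,
    (t.map fun j => List.replicate (2 * c) (dollar j)).flatten, ?_, ?_, ?_⟩
  · rw [gadgetA, List.ofFn_eq_map, hst]
    simp
  · intro y hy
    simp only [List.mem_flatten, List.mem_map] at hy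
    obtain ⟨l, ⟨j, hj, rfl⟩, hy⟩ := hy
    exact ⟨j, List.eq_of_mem_replicate hy, fun h => hs (h ▸ hj)⟩
  · intro y hy
    simp only [List.mem_flatten, List.mem_map] at hy
    obtain ⟨l, ⟨j, hj, rfl⟩, hy⟩ := hy
    exact ⟨j, List.eq_of_mem_replicate hy, fun h => ht (h ▸ hj)⟩

theorem gadgetAG_eq {β : Type*} (k c : ℕ) (dollar : Fin k → β) (pct : β) (i : Fin k) (f n : ℕ)
    (X : ℕ → List β) :
    gadgetAG k c dollar pct i f (fun p : Fin n => X p) =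
      catN (fun _ => gadgetAminus k c dollar i) f ++
      catN (fun q => gadgetA k c dollar ++ X q ++ List.replicate (2 * c) pct) n ++
      catN (fun _ => gadgetAminus k c dollar i) f := by
  rw [gadgetAG, strPow_eq_catN,
    ofFn_flatten_eq_catN (fun q => gadgetA k c dollar ++ X q ++ List.replicate (2 * c) pct)]

/-- Number of special symbols in a string. -/
def spw {β : Type*} [DecidableEq β] (k : ℕ) (dollar : Fin k → β) (pct : β) (l : List β) : ℕ :=
  ∑ j, l.count (dollar j) + l.count pct

theorem spw_append {β : Type*} [DecidableEq β] (k : ℕ) (dollar : Fin k → β) (pct : β)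
    (l l' : List β) : spw k dollar pct (l ++ l') = spw k dollar pct l + spw k dollar pct l' := by
  simp only [spw, List.count_append, Finset.sum_add_distrib]
  omega

theorem length_le_spw {β : Type*} [DecidableEq β] (k : ℕ) (dollar : Fin k → β) (pct : β)
    (l : List β) (h : ∀ y ∈ l, (∃ j, y = dollar j) ∨ y = pct) :
    l.length ≤ spw k dollar pct l := by
  induction l with
  | nil => simp
  | cons y l ih =>
    have ih := ih fun y' hy' => h y' (by simp [hy'])
    have : y :: l = [y] ++ l := rfl
    rw [this, spw_append, List.length_append]
    have : 1 ≤ spw k dollar pct [y] := by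
      rcases h y (by simp) with ⟨j, rfl⟩ | rfl
      · have : 1 ≤ ∑ j', [dollar j].count (dollar j') := by
          refine le_trans ?_ (Finset.single_le_sum (f := fun j' => [dollar j].count (dollar j'))
            (fun _ _ => Nat.zero_le _) (Finset.mem_univ j))
          simp
        unfold spw
        omega
      · simp [spw]
    simp only [List.length_singleton]
    omega

theorem length_le_spw_cat {β : Type*} [DecidableEq β] (k : ℕ) (dollar : Fin k → β) (pct : β)
    (a t b : ℕ → List β) (M : ℕ)
    (ha : ∀ p < M, ∀ y ∈ a p, (∃ j, y = dollar j) ∨ y = pct)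
    (hb : ∀ p < M, ∀ y ∈ b p, (∃ j, y = dollar j) ∨ y = pct) :
    (catN (fun p => a p ++ t p ++ b p) M).length ≤
      spw k dollar pct (catN (fun p => a p ++ t p ++ b p) M)
        + ∑ p ∈ Finset.range M, (t p).length := by
  induction M with
  | zero => simp [catN]
  | succ M ih =>
    have ih := ih (fun p hp => ha p (by omega)) (fun p hp => hb p (by omega))
    rw [catN, Finset.sum_range_succ]
    simp only [spw_append, List.length_append]
    have h1 := length_le_spw k dollar pct _ (ha M (by omega))
    have h2 := length_le_spw k dollar pct _ (hb M (by omega))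
    omega

theorem lcs_bits {β : Type*} (K : ℕ) (CG : Fin (K + 1) → Bool → List β) (z : ℕ)
    (hCG : ∀ b : Fin (K + 1) → Bool,
      lcsLen (List.ofFn fun i => CG i (b i)) = if ∀ i, b i = true then z else z + 1)
    (x : Fin K → Bool) (y : Bool) (t : List β) (hx : ∀ i, t.Sublist (CG i.castSucc (x i)))
    (hy : t.Sublist (CG (Fin.last K) y)) :
    t.length ≤ z + 1 ∧ (t.length = z + 1 → ¬ (y = true ∧ ∀ i, x i = true)) := by
  set b : Fin (K + 1) → Bool := Fin.snoc (α := fun _ => Bool) x y with hb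
  have h := hCG b
  have hle := le_lcsLen (List.ofFn fun i => CG i (b i)) (by simp) t (by
    intro s hs
    rw [List.mem_ofFn] at hs
    obtain ⟨i, rfl⟩ := hs
    refine Fin.lastCases ?_ (fun i => ?_) i
    · simpa [hb] using hy
    · simpa [hb] using hx i)
  rw [h] at hle
  constructor
  · split_ifs at hle <;> omega
  · rintro ht ⟨h1, h2⟩
    rw [if_pos ?_] at hle
    · omega
    · intro i
      refine Fin.lastCases ?_ (fun i => ?_) i
      · simpa [hb] using h1
      · simpa [hb] using h2 i

theorem core_upper {β : Type*} (K c N M f z : ℕ) (hM : 0 < M)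
    (Sig : Set β) (CG : Fin (K + 1) → Bool → List β)
    (hCGlen : ∀ i b, (CG i b).length = c)
    (hCGin : ∀ i b, ∀ ch ∈ CG i b, ch ∈ Sig)
    (hCG : ∀ b : Fin (K + 1) → Bool,
      lcsLen (List.ofFn fun i => CG i (b i)) = if ∀ i, b i = true then z else z + 1)
    (hc : 0 < c)
    (dollar : Fin (K + 1) → β) (pct : β)
    (hdinj : Function.Injective dollar)
    (hdp : ∀ i, dollar i ≠ pct)
    (hdS : ∀ i, dollar i ∉ Sig) (hpS : pct ∉ Sig)
    (xb : Fin K → ℕ → Bool) (yb : ℕ → Bool) (T : List β)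
    (hTx : ∀ i : Fin K, T.Sublist (gadgetAG (K + 1) c dollar pct i.castSucc f
      (fun p : Fin N => CG i.castSucc (xb i p))))
    (hTy : T.Sublist (gadgetAG (K + 1) c dollar pct (Fin.last K) f
      (fun p : Fin M => CG (Fin.last K) (yb p)))) :
    T.length ≤ 2 * c * (2 * M + K * N) + (z + 1) * M ∧
    (T.length = 2 * c * (2 * M + K * N) + (z + 1) * M →
      ∃ s : Fin K → ℕ, (∀ i, s i + M ≤ N) ∧
        ∀ p < M, ¬ (yb p = true ∧ ∀ i, xb i (s i + p) = true)) := by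
  classical
  replace hTx : ∀ i : Fin K, T.Sublist (catN (fun _ => gadgetAminus (K + 1) c dollar i.castSucc) f ++
      catN (fun q => gadgetA (K + 1) c dollar ++ CG i.castSucc (xb i q) ++
        List.replicate (2 * c) pct) N ++
      catN (fun _ => gadgetAminus (K + 1) c dollar i.castSucc) f) := fun i => by
    rw [← gadgetAG_eq (K + 1) c dollar pct _ f N (fun p => CG i.castSucc (xb i p))]
    exact hTx i
  rw [gadgetAG_eq (K + 1) c dollar pct _ f M (fun p => CG _ (yb p))] at hTy
  have hAm : ∀ i : Fin (K + 1), ∀ y ∈ catN (fun _ => gadgetAminus (K + 1) c dollar i) f,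
      ∃ j, j ≠ i ∧ y = dollar j := by
    intro i y hy
    obtain ⟨_, _, hy⟩ := mem_catN hy
    rw [gadgetAminus_eq] at hy
    exact mem_dolW hy
  have hA : ∀ y ∈ gadgetA (K + 1) c dollar, ∃ j, y = dollar j := by
    intro y hy
    rw [gadgetA_eq] at hy
    obtain ⟨j, _, h⟩ := mem_dolW hy
    exact ⟨j, h⟩
  have hAc : ∀ i, (gadgetA (K + 1) c dollar).count (dollar i) = 2 * c := by
    intro i
    obtain ⟨A₁, A₂, h, h1, h2⟩ := gadgetA_split (K + 1) c dollar i
    rw [h, List.count_append, List.count_append, List.count_replicate_self,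
      List.count_eq_zero.2, List.count_eq_zero.2]
    · omega
    · intro h'
      obtain ⟨j, e, hj⟩ := h2 _ h'
      exact hj (hdinj e).symm
    · intro h'
      obtain ⟨j, e, hj⟩ := h1 _ h'
      exact hj (hdinj e).symm
  have hApct : (gadgetA (K + 1) c dollar).count pct = 0 := List.count_eq_zero.2 fun h => by
    obtain ⟨j, e⟩ := hA _ h
    exact hdp j e.symm
  have hCGx : ∀ i j b, (CG j b).count (dollar i) = 0 := fun i j b =>
    List.count_eq_zero.2 fun h => hdS i (hCGin _ _ _ h)
  have hCGp : ∀ j b, (CG j b).count pct = 0 := fun j b =>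
    List.count_eq_zero.2 fun h => hpS (hCGin _ _ _ h)
  have hAm0 : ∀ i, (catN (fun _ => gadgetAminus (K + 1) c dollar i) f).count (dollar i) = 0 := fun i =>
    List.count_eq_zero.2 fun h => by
      obtain ⟨j, hj, e⟩ := hAm i _ h
      exact hj (hdinj e).symm
  have hAmp : ∀ i, (catN (fun _ => gadgetAminus (K + 1) c dollar i) f).count pct = 0 := fun i =>
    List.count_eq_zero.2 fun h => by
      obtain ⟨j, hj, e⟩ := hAm i _ h
      exact hdp j e.symm
  have hBd : ∀ i, (List.replicate (2 * c) pct).count (dollar i) = 0 := fun i =>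
    List.count_eq_zero.2 fun h => hdp i (List.eq_of_mem_replicate h)
  have hcntK : T.count (dollar (Fin.last K)) ≤ 2 * c * M := by
    refine (hTy.count_le _).trans ?_
    simp only [List.count_append, catN_count (fun q => gadgetA (K + 1) c dollar ++ _ ++ _), hAm0, hAc,
      hCGx, hBd]
    simp [mul_comm]
  have hcntP : T.count pct ≤ 2 * c * M := by
    refine (hTy.count_le _).trans ?_
    simp only [List.count_append, catN_count (fun q => gadgetA (K + 1) c dollar ++ _ ++ _), hAmp, hApct,
      hCGp, List.count_replicate_self]
    simp [mul_comm]
  -- decompose T along the last string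
  obtain ⟨PC, S, rfl, hPC, hS⟩ := List.sublist_append_iff.1 hTy
  obtain ⟨P, Cc, rfl, hP, hCc⟩ := List.sublist_append_iff.1 hPC
  obtain ⟨G, rfl, hG⟩ := sublist_catN _ _ _ hCc
  have : ∀ p, ∃ x : List β × List β × List β, p < M → G p = x.1 ++ x.2.1 ++ x.2.2 ∧
      x.1.Sublist (gadgetA (K + 1) c dollar) ∧ x.2.1.Sublist (CG (Fin.last K) (yb p)) ∧
      x.2.2.Sublist (List.replicate (2 * c) pct) := by
    intro p
    by_cases hp : p < M
    · obtain ⟨r12, r3, e, h12, h3⟩ := List.sublist_append_iff.1 (hG p hp)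
      obtain ⟨q1, q2, rfl, g1, g2⟩ := List.sublist_append_iff.1 h12
      exact ⟨(q1, q2, r3), fun _ => ⟨e, g1, g2, h3⟩⟩
    · exact ⟨([], [], []), fun h => absurd h hp⟩
  choose x hx using this
  obtain ⟨a, ha⟩ : ∃ a : ℕ → List β, a = fun p => (x p).1 := ⟨_, rfl⟩
  obtain ⟨t, ht⟩ : ∃ t : ℕ → List β, t = fun p => (x p).2.1 := ⟨_, rfl⟩
  obtain ⟨b, hb⟩ : ∃ b : ℕ → List β, b = fun p => (x p).2.2 := ⟨_, rfl⟩
  have hcat : catN G M = catN (fun p => a p ++ t p ++ b p) M := by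
    have : ∀ m ≤ M, catN G m = catN (fun p => a p ++ t p ++ b p) m := by
      intro m hm
      induction m with
      | zero => rfl
      | succ m ihm => rw [catN, catN, ihm (by omega), (hx m (by omega)).1, ha, ht, hb]
    exact this M le_rfl
  have hasub : ∀ p < M, (a p).Sublist (gadgetA (K + 1) c dollar) := fun p hp => by
    rw [ha]; exact (hx p hp).2.1
  have htsub : ∀ p < M, (t p).Sublist (CG (Fin.last K) (yb p)) := fun p hp => by
    rw [ht]; exact (hx p hp).2.2.1
  have hbsub : ∀ p < M, (b p).Sublist (List.replicate (2 * c) pct) := fun p hp => by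
    rw [hb]; exact (hx p hp).2.2.2
  clear hx hG hCc ha ht hb hPC hTy
  rw [hcat] at hTx hcntK hcntP ⊢
  clear hcat
  have htS : ∀ p < M, ∀ y ∈ t p, y ∈ Sig := fun p hp y hy => hCGin _ _ _ ((htsub p hp).subset hy)
  have hPsp : ∀ y ∈ P, ∃ j, y = dollar j := fun y hy => by
    obtain ⟨j, _, e⟩ := hAm _ _ (hP.subset hy); exact ⟨j, e⟩
  have hSsp : ∀ y ∈ S, ∃ j, y = dollar j := fun y hy => by
    obtain ⟨j, _, e⟩ := hAm _ _ (hS.subset hy); exact ⟨j, e⟩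
  have hbpct : ∀ p < M, ∀ y ∈ b p, y = pct := fun p hp y hy =>
    List.eq_of_mem_replicate ((hbsub p hp).subset hy)
  -- apply the single string lemma
  have hfacts : ∀ i : Fin K, ∃ e : ℕ → ℕ,
      ((P ++ catN (fun p => a p ++ t p ++ b p) M ++ S).count (dollar i.castSucc)
        + ∑ p ∈ Finset.range M, e p ≤ 2 * c * N) ∧
      (∀ p < M, e p < 2 * c → t p ≠ [] → ∃ q < N, (t p).Sublist (CG i.castSucc (xb i q))) ∧
      ((P ++ catN (fun p => a p ++ t p ++ b p) M ++ S).count (dollar i.castSucc) = 2 * c * N →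
        (∀ p < M, t p ≠ [] ∧ pct ∈ b p) →
        ∃ s, s + M ≤ N ∧ ∀ p < M, (t p).Sublist (CG i.castSucc (xb i (s + p)))) := by
    intro i
    obtain ⟨A₁, A₂, hsplit, h1, h2⟩ := gadgetA_split (K + 1) c dollar i.castSucc
    have hfree : ∀ y, (∃ j, y = dollar j ∧ j ≠ i.castSucc) → y ∉ Sig ∧ y ≠ dollar i.castSucc := by
      rintro y ⟨j, rfl, hj⟩
      exact ⟨hdS j, fun e => hj (hdinj e)⟩
    have hAm' : ∀ y ∈ catN (fun _ => gadgetAminus (K + 1) c dollar i.castSucc) f,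
        y ∉ Sig ∧ y ≠ dollar i.castSucc := fun y hy => by
      obtain ⟨j, hj, e⟩ := hAm _ y hy
      exact hfree y ⟨j, e, hj⟩
    have hTi := hTx i
    rw [hsplit] at hTi
    exact string_facts Sig (dollar i.castSucc) pct (2 * c) (by omega) _ _ A₁ A₂ _
      (fun q => CG i.castSucc (xb i q)) hAm' hAm' (fun y hy => hfree y (h1 y hy))
      (fun y hy => hfree y (h2 y hy))
      (fun y hy => by
        rw [List.eq_of_mem_replicate hy]; exact ⟨hpS, fun e => hdp _ e.symm⟩)
      (hdS _) hpS (fun e => hdp _ e.symm) (fun p => hCGin _ _) N M hM P S a t b htS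
      (fun p hp => ((hasub p hp).count_le _).trans (hAc _).le)
      (fun p hp => List.count_eq_zero.2 fun h => hdp _ (hbpct p hp _ h)) hTi
  choose e he1 he2 he3 using hfacts
  have hpb : ∀ p < M, (t p).length ≤ z + 1 + ∑ i, e i p ∧
      ((t p).length = z + 1 + ∑ i, e i p → ∀ i, e i p = 0) := by
    intro p hp
    have htc : (t p).length ≤ c := (htsub p hp).length_le.trans (hCGlen _ _).le
    by_cases hbig : ∃ i, 2 * c ≤ e i p
    · obtain ⟨i, hi⟩ := hbig
      have := Finset.single_le_sum (f := fun i => e i p) (fun _ _ => Nat.zero_le _)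
        (Finset.mem_univ i)
      constructor
      · omega
      · omega
    · push Not at hbig
      by_cases hne : t p = []
      · rw [hne]
        constructor
        · simp
        · intro h; simp only [List.length_nil] at h; omega
      · choose q hq hqs using fun i => he2 i p hp (hbig i) hne
        have hl := (lcs_bits K CG z hCG (fun i => xb i (q i)) (yb p) (t p) hqs (htsub p hp)).1
        refine ⟨by omega, fun h => ?_⟩
        have h0 : ∑ i, e i p = 0 := by omega
        exact fun i => Finset.sum_eq_zero_iff.1 h0 i (Finset.mem_univ i)
  have hlen : (P ++ catN (fun p => a p ++ t p ++ b p) M ++ S).length ≤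
      spw (K + 1) dollar pct (P ++ catN (fun p => a p ++ t p ++ b p) M ++ S)
        + ∑ p ∈ Finset.range M, (t p).length := by
    simp only [spw_append, List.length_append]
    have h1 := length_le_spw (K + 1) dollar pct P fun y hy => Or.inl (hPsp y hy)
    have h2 := length_le_spw (K + 1) dollar pct S fun y hy => Or.inl (hSsp y hy)
    have h3 := length_le_spw_cat (K + 1) dollar pct a t b M
      (fun p hp y hy => Or.inl (hA y ((hasub p hp).subset hy)))
      (fun p hp y hy => Or.inr (hbpct p hp y hy))
    omega
  have hcntpb : (P ++ catN (fun p => a p ++ t p ++ b p) M ++ S).count pct =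
      ∑ p ∈ Finset.range M, (b p).count pct := by
    rw [List.count_append, List.count_append, catN_count,
      List.count_eq_zero.2 (fun h => by obtain ⟨j, e⟩ := hPsp _ h; exact hdp j e.symm),
      List.count_eq_zero.2 (fun h => by obtain ⟨j, e⟩ := hSsp _ h; exact hdp j e.symm)]
    rw [zero_add, add_zero]
    refine Finset.sum_congr rfl fun p hp => ?_
    have hp := Finset.mem_range.1 hp
    rw [List.count_append, List.count_append,
      List.count_eq_zero.2 (fun h => by
        obtain ⟨j, e⟩ := hA _ ((hasub p hp).subset h); exact hdp j e.symm),
      List.count_eq_zero.2 (fun h => hpS (htS p hp _ h))]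
    omega
  generalize P ++ catN (fun p => a p ++ t p ++ b p) M ++ S = T at *
  have hspw : spw (K + 1) dollar pct T = ∑ i : Fin K, T.count (dollar i.castSucc)
      + T.count (dollar (Fin.last K)) + T.count pct := by
    rw [spw, Fin.sum_univ_castSucc]
  have hSAE : ∑ i : Fin K, T.count (dollar i.castSucc)
      + ∑ i : Fin K, ∑ p ∈ Finset.range M, e i p ≤ 2 * c * (K * N) := by
    rw [← Finset.sum_add_distrib]
    refine (Finset.sum_le_sum fun i _ => he1 i).trans ?_
    simp only [Finset.sum_const, Finset.card_univ, Fintype.card_fin, smul_eq_mul]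
    exact le_of_eq (by ring)
  have hsumt : ∑ p ∈ Finset.range M, (z + 1 + ∑ i, e i p) =
      (z + 1) * M + ∑ i : Fin K, ∑ p ∈ Finset.range M, e i p := by
    rw [Finset.sum_add_distrib, Finset.sum_comm]
    simp [mul_comm]
  have htl : ∑ p ∈ Finset.range M, (t p).length ≤ ∑ p ∈ Finset.range M, (z + 1 + ∑ i, e i p) :=
    Finset.sum_le_sum fun p hp => (hpb p (Finset.mem_range.1 hp)).1
  have hexp : 2 * c * (2 * M + K * N) = 2 * c * M + 2 * c * M + 2 * c * (K * N) := by ring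
  rw [hexp]
  refine ⟨by omega, fun hT => ?_⟩
  have ht1 : ∑ p ∈ Finset.range M, (t p).length = ∑ p ∈ Finset.range M, (z + 1 + ∑ i, e i p) := by
    omega
  have ht2 := (Finset.sum_eq_sum_iff_of_le fun p hp => (hpb p (Finset.mem_range.1 hp)).1).1 ht1
  have he0 : ∀ p < M, ∀ i, e i p = 0 := fun p hp =>
    (hpb p hp).2 (ht2 p (Finset.mem_range.2 hp))
  have htz : ∀ p < M, (t p).length = z + 1 := fun p hp => by
    rw [ht2 p (Finset.mem_range.2 hp), Finset.sum_eq_zero fun i _ => he0 p hp i, add_zero]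
  have hE0 : ∑ i : Fin K, ∑ p ∈ Finset.range M, e i p = 0 :=
    Finset.sum_eq_zero fun i _ => Finset.sum_eq_zero fun p hp => he0 p (Finset.mem_range.1 hp) i
  have hsumc : ∑ i : Fin K, T.count (dollar i.castSucc) = ∑ _i : Fin K, 2 * c * N := by
    have : ∑ _i : Fin K, 2 * c * N = 2 * c * (K * N) := by
      simp only [Finset.sum_const, Finset.card_univ, Fintype.card_fin, smul_eq_mul]
      ring
    omega
  have hci : ∀ i : Fin K, T.count (dollar i.castSucc) = 2 * c * N := fun i =>
    (Finset.sum_eq_sum_iff_of_le fun i _ => (Nat.le_add_right _ _).trans (he1 i)).1 hsumc i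
      (Finset.mem_univ i)
  have hbc : ∑ p ∈ Finset.range M, (b p).count pct = ∑ _p ∈ Finset.range M, 2 * c := by
    rw [← hcntpb, Finset.sum_const, Finset.card_range, smul_eq_mul, mul_comm M]
    omega
  have hbp : ∀ p < M, pct ∈ b p := fun p hp => by
    have := (Finset.sum_eq_sum_iff_of_le fun p hp =>
      ((hbsub p (Finset.mem_range.1 hp)).count_le pct).trans
        (List.count_replicate_self (a := pct) (n := 2 * c)).le).1 hbc p (Finset.mem_range.2 hp)
    exact List.count_pos_iff.1 (by omega)
  choose s hs1 hs2 using fun i => he3 i (hci i) fun p hp =>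
    ⟨by intro h; have := htz p hp; simp [h] at this, hbp p hp⟩
  exact ⟨s, hs1, fun p hp => (lcs_bits K CG z hCG (fun i => xb i (s i + p)) (yb p) (t p)
    (fun i => hs2 i p hp) (htsub p hp)).2 (htz p hp)⟩

theorem core_lower {β : Type*} (K c N M f z : ℕ) (hN : N = M + f)
    (CG : Fin (K + 1) → Bool → List β)
    (hCG : ∀ b : Fin (K + 1) → Bool,
      lcsLen (List.ofFn fun i => CG i (b i)) = if ∀ i, b i = true then z else z + 1)
    (dollar : Fin (K + 1) → β) (pct : β)
    (xb : Fin K → ℕ → Bool) (yb : ℕ → Bool) (s : Fin K → ℕ) (hs : ∀ i, s i ≤ f)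
    (hgood : ∀ p < M, ¬ (yb p = true ∧ ∀ i, xb i (s i + p) = true)) :
    ∃ T : List β, T.length = 2 * c * (2 * M + K * N) + (z + 1) * M ∧
    (∀ i : Fin K, T.Sublist (gadgetAG (K + 1) c dollar pct i.castSucc f
      (fun p : Fin N => CG i.castSucc (xb i p)))) ∧
    (T.Sublist (gadgetAG (K + 1) c dollar pct (Fin.last K) f
      (fun p : Fin M => CG (Fin.last K) (yb p)))) := by
  classical
  have hw : ∀ p, ∃ w : List β, p < M → w.length = z + 1 ∧
      (∀ i : Fin K, w.Sublist (CG i.castSucc (xb i (s i + p)))) ∧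
      w.Sublist (CG (Fin.last K) (yb p)) := by
    intro p
    by_cases hp : p < M
    · set b : Fin (K + 1) → Bool :=
        Fin.snoc (α := fun _ => Bool) (fun i => xb i (s i + p)) (yb p) with hb
      obtain ⟨w, hw1, hw2⟩ := exists_lcs (List.ofFn fun i => CG i (b i)) (by simp)
      rw [hCG, if_neg] at hw1
      · refine ⟨w, fun _ => ⟨hw1, fun i => ?_, ?_⟩⟩
        · have := hw2 _ (List.mem_ofFn.2 ⟨i.castSucc, rfl⟩)
          simpa [hb] using this
        · have := hw2 _ (List.mem_ofFn.2 ⟨Fin.last K, rfl⟩)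
          simpa [hb] using this
      · intro hall
        refine hgood p hp ⟨?_, fun i => ?_⟩
        · simpa [hb] using hall (Fin.last K)
        · simpa [hb] using hall i.castSucc
    · exact ⟨[], fun h => absurd h hp⟩
  choose w hw using hw
  obtain ⟨Sl, hSl⟩ : ∃ Sl : ℕ → Fin (K + 1) → Prop, Sl = fun τ j =>
    ∃ i : Fin K, j = i.castSucc ∧ f ≤ τ + s i := ⟨_, rfl⟩
  obtain ⟨Sr, hSr⟩ : ∃ Sr : ℕ → Fin (K + 1) → Prop, Sr = fun τ j =>
    ∃ i : Fin K, j = i.castSucc ∧ τ + s i < f := ⟨_, rfl⟩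
  set A := gadgetA (K + 1) c dollar with hA
  set B := List.replicate (2 * c) pct with hB
  set Lf : ℕ → List β := fun τ => dolW (K + 1) c dollar (Sl τ) with hLf
  set Rg : ℕ → List β := fun τ => dolW (K + 1) c dollar (Sr τ) with hRg
  have hsubA : ∀ (S : Fin (K + 1) → Prop), (dolW (K + 1) c dollar S).Sublist A := fun S => by
    rw [hA, gadgetA_eq]; exact dolW_mono _ _ _ _ _ (fun _ _ => trivial)
  refine ⟨catN Lf f ++ catN (fun p => A ++ w p ++ B) M ++ catN Rg f, ?_, ?_, ?_⟩
  · have hAl : A.length = 2 * c * (K + 1) := by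
      rw [hA, gadgetA_eq, dolW_length]
      simp [mul_comm]
    have hLR : ∀ τ, (Lf τ).length + (Rg τ).length = 2 * c * K := by
      intro τ
      rw [hLf, hRg]
      simp only [dolW_length]
      rw [← Finset.sum_add_distrib, Fin.sum_univ_castSucc]
      have hl : ∀ i : Fin K, Sl τ i.castSucc ↔ f ≤ τ + s i := fun i => by
        rw [hSl]
        simp only [Fin.castSucc_inj, exists_eq_left']
      have hr : ∀ i : Fin K, Sr τ i.castSucc ↔ τ + s i < f := fun i => by
        rw [hSr]
        simp only [Fin.castSucc_inj, exists_eq_left']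
      have h2 : ∀ i' : Fin K, ¬ Fin.last K = i'.castSucc := fun i' h =>
        (Fin.castSucc_lt_last i').ne h.symm
      have hl2 : ¬ Sl τ (Fin.last K) := by
        rw [hSl]; rintro ⟨i, h, -⟩; exact h2 i h
      have hr2 : ¬ Sr τ (Fin.last K) := by
        rw [hSr]; rintro ⟨i, h, -⟩; exact h2 i h
      rw [if_neg hl2, if_neg hr2, Finset.sum_congr rfl (g := fun _ => 2 * c)]
      · simp [mul_comm]
      · intro i _
        by_cases h : f ≤ τ + s i
        · rw [if_pos ((hl i).2 h), if_neg (fun h' => absurd ((hr i).1 h') (not_lt.2 h)), add_zero]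
        · rw [if_neg (fun h' => h ((hl i).1 h')), if_pos ((hr i).2 (not_le.1 h)), zero_add]
    simp only [List.length_append, catN_length]
    have e1 : ∑ τ ∈ Finset.range f, (Lf τ).length + ∑ τ ∈ Finset.range f, (Rg τ).length
        = 2 * c * K * f := by
      rw [← Finset.sum_add_distrib, Finset.sum_congr rfl fun τ _ => hLR τ]
      simp [mul_comm]
    have e2 : ∑ p ∈ Finset.range M, (A.length + (w p).length + B.length)
        = (2 * c * (K + 1) + (z + 1) + 2 * c) * M := by
      rw [Finset.sum_congr rfl (g := fun _ => 2 * c * (K + 1) + (z + 1) + 2 * c)]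
      · simp [mul_comm]
      · intro p hp
        rw [hAl, (hw p (Finset.mem_range.1 hp)).1, hB, List.length_replicate]
    rw [e2, add_right_comm, e1, hN]
    ring
  · intro i
    rw [gadgetAG_eq (K + 1) c dollar pct _ f N (fun p => CG i.castSucc (xb i p)), ← hA, ← hB]
    have hsi := hs i
    have hAmi : ∀ S : Fin (K + 1) → Prop, ¬ S i.castSucc →
        (dolW (K + 1) c dollar S).Sublist (gadgetAminus (K + 1) c dollar i.castSucc) := by
      intro S hS
      rw [gadgetAminus_eq]
      exact dolW_mono _ _ _ _ _ fun j hj e => hS (e ▸ hj)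
    have eN : N = s i + M + (f - s i) := by omega
    have ef : f = (f - s i) + s i := by omega
    have hLsplit : catN Lf f = catN Lf (f - s i) ++ catN (fun x => Lf (f - s i + x)) (s i) := by
      rw [← catN_add, ← ef]
    have hRsplit : catN Rg f = catN Rg (f - s i) ++ catN (fun x => Rg (f - s i + x)) (s i) := by
      rw [← catN_add, ← ef]
    rw [hLsplit, hRsplit, eN, catN_add, catN_add]
    have g1 : (catN Lf (f - s i)).Sublist (catN (fun _ => gadgetAminus (K + 1) c dollar i.castSucc) f) := by
      refine (catN_mono _ _ _ fun τ hτ => hAmi _ ?_).trans (catN_sub_le _ (Nat.sub_le f (s i)))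
      rw [hSl]
      rintro ⟨i', h1, h2⟩
      rw [Fin.castSucc_inj] at h1
      subst h1
      omega
    have gA : ∀ (S : Fin (K + 1) → Prop) (X : List β), (dolW (K + 1) c dollar S).Sublist (A ++ X ++ B) :=
      fun S X => (hsubA S).trans (by
        rw [List.append_assoc]; exact List.sublist_append_left _ _)
    have g2 : (catN (fun x => Lf (f - s i + x)) (s i)).Sublist
        (catN (fun q => A ++ CG i.castSucc (xb i q) ++ B) (s i)) :=
      catN_mono _ _ _ fun τ _ => gA _ _
    have g3 : (catN (fun p => A ++ w p ++ B) M).Sublist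
        (catN (fun x => A ++ CG i.castSucc (xb i (s i + x)) ++ B) M) :=
      catN_mono _ _ _ fun p hp =>
        ((List.Sublist.refl A).append ((hw p hp).2.1 i)).append (List.Sublist.refl B)
    have g4 : (catN Rg (f - s i)).Sublist
        (catN (fun x => A ++ CG i.castSucc (xb i (s i + M + x)) ++ B) (f - s i)) :=
      catN_mono _ _ _ fun τ _ => gA _ _
    have g5 : (catN (fun x => Rg (f - s i + x)) (s i)).Sublist
        (catN (fun _ => gadgetAminus (K + 1) c dollar i.castSucc) f) := by
      refine (catN_mono _ _ _ fun τ hτ => hAmi _ ?_).trans (catN_sub_le _ hsi)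
      rw [hSr]
      rintro ⟨i', h1, h2⟩
      rw [Fin.castSucc_inj] at h1
      subst h1
      omega
    have := (((g1.append g2).append g3).append g4).append g5
    simpa only [List.append_assoc] using this
  · rw [gadgetAG_eq (K + 1) c dollar pct _ f M (fun p => CG (Fin.last K) (yb p)), ← hA, ← hB]
    have hAmi : ∀ S : Fin (K + 1) → Prop, ¬ S (Fin.last K) →
        (dolW (K + 1) c dollar S).Sublist (gadgetAminus (K + 1) c dollar (Fin.last K)) := by
      intro S hS
      rw [gadgetAminus_eq]
      exact dolW_mono _ _ _ _ _ fun j hj e => hS (e ▸ hj)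
    refine List.Sublist.append (List.Sublist.append ?_ ?_) ?_
    · refine catN_mono _ _ _ fun τ _ => hAmi _ ?_
      rw [hSl]
      rintro ⟨i', h1, _⟩
      exact (Fin.castSucc_lt_last i').ne h1.symm
    · exact catN_mono _ _ _ fun p hp =>
        ((List.Sublist.refl A).append (hw p hp).2.2).append (List.Sublist.refl B)
    · refine catN_mono _ _ _ fun τ _ => hAmi _ ?_
      rw [hSr]
      rintro ⟨i', h1, _⟩
      exact (Fin.castSucc_lt_last i').ne h1.symm

/-- The selected alignment gadgets. -/
theorem core_selected {β : Type*} (K c N M f z C : ℕ) (hK : 0 < K) (hM : 0 < M) (hN : N = M + f)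
    (Sig : Set β) (CG : Fin (K + 1) → Bool → List β)
    (hCGlen : ∀ i b, (CG i b).length = c)
    (hCGin : ∀ i b, ∀ ch ∈ CG i b, ch ∈ Sig)
    (hCG : ∀ b : Fin (K + 1) → Bool,
      lcsLen (List.ofFn fun i => CG i (b i)) = if ∀ i, b i = true then z else z + 1)
    (dollar : Fin (K + 1) → β) (pct atSym : β)
    (hdinj : Function.Injective dollar)
    (hdp : ∀ i, dollar i ≠ pct) (hda : ∀ i, dollar i ≠ atSym) (hpa : pct ≠ atSym)
    (hdS : ∀ i, dollar i ∉ Sig) (hpS : pct ∉ Sig) (haS : atSym ∉ Sig)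
    (hC : C = 2 * c * (2 * M + K * N) + (z + 1) * M)
    (xb : Fin K → ℕ → Bool) (yb : ℕ → Bool) (Lst : List (List β))
    (hLst : Lst = (List.ofFn fun i : Fin K => gadgetSAGx (K + 1) c dollar pct atSym C i.castSucc f
      (fun p : Fin N => CG i.castSucc (xb i p))) ++
      [gadgetSAGy (K + 1) c dollar pct atSym C (Fin.last K) f
      (fun p : Fin M => CG (Fin.last K) (yb p))])
    (Orth : Prop)
    (hOrth : Orth ↔ ∃ s : Fin K → ℕ, (∀ i, s i ≤ f) ∧
        ∀ p < M, ¬ (yb p = true ∧ ∀ i, xb i (s i + p) = true)) :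
    (Orth → lcsLen Lst = C) ∧ (¬ Orth → lcsLen Lst = C - 1) := by
  have hne : Lst ≠ [] := by rw [hLst]; simp
  have hmem : ∀ T : List β, (∀ l ∈ Lst, T.Sublist l) ↔
      (∀ i : Fin K, T.Sublist (List.replicate (C - 1) atSym ++ gadgetAG (K + 1) c dollar pct
        i.castSucc f (fun p : Fin N => CG i.castSucc (xb i p)))) ∧
      T.Sublist (gadgetAG (K + 1) c dollar pct (Fin.last K) f
        (fun p : Fin M => CG (Fin.last K) (yb p)) ++ List.replicate (C - 1) atSym) := by
    intro T
    rw [hLst]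
    simp only [List.mem_append, List.mem_ofFn, List.mem_singleton, or_imp, forall_and,
      forall_exists_index, forall_apply_eq_imp_iff, forall_eq, gadgetSAGx, gadgetSAGy]
  have hc : 0 < c := by
    obtain ⟨w, hw1, hw2⟩ := exists_lcs (List.ofFn fun i => CG i ((fun _ => false) i)) (by simp)
    rw [hCG, if_neg (by intro h; simpa using h 0)] at hw1
    have := (hw2 _ (List.mem_ofFn.2 ⟨0, rfl⟩)).length_le
    rw [hCGlen] at this
    omega
  have hAGat : ∀ (i : Fin (K + 1)) (n : ℕ) (X : ℕ → Bool),
      atSym ∉ gadgetAG (K + 1) c dollar pct i f (fun p : Fin n => CG i (X p)) := by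
    intro i n X h
    rw [gadgetAG_eq (K + 1) c dollar pct i f n (fun p => CG i (X p))] at h
    have h0 : ∀ (S : Fin (K + 1) → Prop) [DecidablePred S], atSym ∉ dolW (K + 1) c dollar S := by
      intro S _ h
      obtain ⟨j, _, e⟩ := mem_dolW h
      exact hda j e.symm
    rcases List.mem_append.1 h with h | h
    · rcases List.mem_append.1 h with h | h
      · obtain ⟨_, _, h⟩ := mem_catN h
        rw [gadgetAminus_eq] at h
        exact h0 _ h
      · obtain ⟨q, _, h⟩ := mem_catN h
        rcases List.mem_append.1 h with h | h
        · rcases List.mem_append.1 h with h | h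
          · rw [gadgetA_eq] at h
            exact h0 _ h
          · exact haS (hCGin _ _ _ h)
        · exact hpa (List.eq_of_mem_replicate h).symm
    · obtain ⟨_, _, h⟩ := mem_catN h
      rw [gadgetAminus_eq] at h
      exact h0 _ h
  -- any common subsequence is short or avoids the selection symbol
  have hkey : ∀ T : List β, (∀ l ∈ Lst, T.Sublist l) → T.length ≤ C - 1 ∨
      (T.length = C ∧ Orth) := by
    intro T hT
    obtain ⟨hx, hy⟩ := (hmem T).1 hT
    by_cases hat : atSym ∈ T
    · left
      obtain ⟨T1, T2, hT12, h1, h2⟩ := List.sublist_append_iff.1 hy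
      obtain ⟨T3, T4, hT34, h3, h4⟩ := List.sublist_append_iff.1 (hx ⟨0, hK⟩)
      have hn1 : atSym ∉ T1 := fun h => hAGat _ _ _ (h1.subset h)
      have hn4 : atSym ∉ T4 := fun h => hAGat _ _ _ (h4.subset h)
      have ha2 : ∀ y ∈ T2, y = atSym := fun y hy => List.eq_of_mem_replicate (h2.subset hy)
      have ha3 : ∀ y ∈ T3, y = atSym := fun y hy => List.eq_of_mem_replicate (h3.subset hy)
      have hl2 : T2.length ≤ C - 1 := by simpa using h2.length_le
      have hl3 : T3.length ≤ C - 1 := by simpa using h3.length_le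
      -- `T1` is empty
      have : T1 = [] := by
        cases T1 with
        | nil => rfl
        | cons y l =>
          exfalso
          cases T3 with
          | nil =>
            simp only [List.nil_append] at hT34
            exact hn4 (hT34 ▸ hat)
          | cons y' l' =>
            rw [hT12] at hT34
            simp only [List.cons_append, List.cons.injEq] at hT34
            apply hn1
            rw [hT34.1, ha3 y' (by simp)]
            simp
      subst this
      rw [hT12]
      simpa using hl2
    · have hx' : ∀ i : Fin K, T.Sublist (gadgetAG (K + 1) c dollar pct
        i.castSucc f (fun p : Fin N => CG i.castSucc (xb i p))) := by
        intro i
        obtain ⟨T3, T4, rfl, h3, h4⟩ := List.sublist_append_iff.1 (hx i)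
        have : T3 = [] := List.eq_nil_iff_forall_not_mem.2 fun y hm => by
          have := List.eq_of_mem_replicate (h3.subset hm)
          subst this
          exact hat (by simp [hm])
        subst this
        simpa using h4
      have hy' : T.Sublist (gadgetAG (K + 1) c dollar pct (Fin.last K) f
        (fun p : Fin M => CG (Fin.last K) (yb p))) := by
        obtain ⟨T3, T4, rfl, h3, h4⟩ := List.sublist_append_iff.1 hy
        have : T4 = [] := List.eq_nil_iff_forall_not_mem.2 fun y hm => by
          have := List.eq_of_mem_replicate (h4.subset hm)
          subst this
          exact hat (by simp [hm])
        subst this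
        simpa using h3
      obtain ⟨h1, h2⟩ := core_upper K c N M f z hM Sig CG hCGlen hCGin hCG hc dollar pct hdinj hdp
        hdS hpS xb yb T hx' hy'
      rw [← hC] at h1 h2
      by_cases hTC : T.length = C
      · right
        refine ⟨hTC, hOrth.2 ?_⟩
        obtain ⟨s, hs1, hs2⟩ := h2 hTC
        exact ⟨s, fun i => by have := hs1 i; omega, hs2⟩
      · left; omega
  obtain ⟨T₀, hT₀, hT₀s⟩ := exists_lcs Lst hne
  have hk0 := hkey T₀ hT₀s
  rw [hT₀] at hk0
  constructor
  · intro hO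
    obtain ⟨s, hs1, hs2⟩ := hOrth.1 hO
    obtain ⟨T, hTl, hTx, hTy⟩ := core_lower K c N M f z hN CG hCG dollar pct xb yb s hs1 hs2
    have := le_lcsLen Lst hne T ((hmem T).2
      ⟨fun i => (hTx i).trans (List.sublist_append_right _ _),
        hTy.trans (List.sublist_append_left _ _)⟩)
    omega
  · intro hO
    have h1 : lcsLen Lst ≤ C - 1 := by
      rcases hk0 with h | h
      · exact h
      · exact absurd h.2 hO
    have := le_lcsLen Lst hne (List.replicate (C - 1) atSym) ((hmem _).2
      ⟨fun i => List.sublist_append_left _ _, List.sublist_append_right _ _⟩)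
    rw [List.length_replicate] at this
    omega

/-- the interleave gadget, Lemma `interleaveGadget`. -/
theorem interleave_gadget
    {β : Type*} (k ℓ n d : ℕ) (hk : 2 ≤ k) (hℓ : 1 ≤ ℓ) (hn : 2 ≤ n) (hd : 1 ≤ d)
    (L : Fin n → Fin d → Bool) (v : Fin k → Fin d → Bool)
    (Sig : Set β) (CG : Fin k → Bool → List β) (c : ℕ)
    (hCGlen : ∀ i b, (CG i b).length = c)
    (hCGin : ∀ i b, ∀ ch ∈ CG i b, ch ∈ Sig)
    (z : ℕ)
    (hCG : ∀ b : Fin k → Bool,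
      lcsLen (List.ofFn fun i => CG i (b i)) = if ∀ i, b i = true then z else z + 1)
    (dollar : Fin k → β) (percent atSym : β)
    (hdinj : Function.Injective dollar)
    (hdp : ∀ i, dollar i ≠ percent) (hda : ∀ i, dollar i ≠ atSym) (hpa : percent ≠ atSym)
    (hdS : ∀ i, dollar i ∉ Sig) (hpS : percent ∉ Sig) (haS : atSym ∉ Sig)
    (C : ℕ)
    (hC : C = 2 * c * (2 * ((d - 1) * n ^ ℓ + 1) + (k - 1) * (d * n ^ ℓ))
        + (z + 1) * ((d - 1) * n ^ ℓ + 1)) :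
    let f : ℕ := d * n ^ ℓ - ((d - 1) * n ^ ℓ + 1)
    let IVG : Fin (k - 1) → List β := fun i =>
      gadgetSAGx k c dollar percent atSym C (i.castLE (Nat.sub_le k 1)) f
        (fun p : Fin (d * n ^ ℓ) =>
          CG (i.castLE (Nat.sub_le k 1))
            (vecS n d ℓ (by omega) L (v (i.castLE (Nat.sub_le k 1))) p))
    let EIVG : List β :=
      gadgetSAGy k c dollar percent atSym C ⟨k - 1, by omega⟩ f
        (fun p : Fin ((d - 1) * n ^ ℓ + 1) =>
          CG ⟨k - 1, by omega⟩ (vecE n d ℓ (v ⟨k - 1, by omega⟩) p))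
    let Orth : Prop := ∃ js : Fin (k - 1) → ℕ, (∀ i, js i < n ^ ℓ) ∧
      ∀ h : Fin d, ¬ (v ⟨k - 1, by omega⟩ h = true ∧
        ∀ i : Fin (k - 1),
          listLProd n d ℓ (by omega) L (js i) h = true ∧
            v (i.castLE (Nat.sub_le k 1)) h = true)
    (Orth → lcsLen (List.ofFn IVG ++ [EIVG]) = C) ∧
    (¬ Orth → lcsLen (List.ofFn IVG ++ [EIVG]) = C - 1) := by
  obtain ⟨K, rfl⟩ : ∃ K, k = K + 1 := ⟨k - 1, by omega⟩
  intro f IVG EIVG Orth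
  have hq : 0 < n ^ ℓ := Nat.pow_pos (by omega)
  obtain ⟨e, rfl⟩ : ∃ e, d = e + 1 := ⟨d - 1, by omega⟩
  have hde : (e + 1) * n ^ ℓ = e * n ^ ℓ + n ^ ℓ := by ring
  have hf : f = n ^ ℓ - 1 := by
    simp only [f, Nat.add_sub_cancel]
    omega
  refine core_selected K c ((e + 1) * n ^ ℓ) ((e + 1 - 1) * n ^ ℓ + 1) f z C (by omega) (by omega)
    (by simp only [Nat.add_sub_cancel]; omega) Sig CG hCGlen hCGin hCG dollar percent atSym hdinj
    hdp hda hpa hdS hpS haS hC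
    (fun i p => vecS n (e + 1) ℓ (by omega) L (v i.castSucc) p)
    (fun p => vecE n (e + 1) ℓ (v (Fin.last K)) p) _ rfl Orth ?_
  have hS : ∀ (i : Fin K) (h : Fin (e + 1)) (j : ℕ), j < n ^ ℓ →
      vecS n (e + 1) ℓ (by omega) L (v i.castSucc) (j + n ^ ℓ * h) =
        (listLProd n (e + 1) ℓ (by omega) L j h && v i.castSucc h) := by
    intro i h j hj
    have h1 : (j + n ^ ℓ * h) / n ^ ℓ = h := by
      rw [Nat.add_mul_div_left _ _ hq, Nat.div_eq_of_lt hj, zero_add]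
    have h2 : (j + n ^ ℓ * h) % n ^ ℓ = j := by
      rw [Nat.add_mul_mod_self_left, Nat.mod_eq_of_lt hj]
    unfold vecS
    simp only [h1, h2, h.isLt, dite_true]
  have hE : ∀ (h : Fin (e + 1)), vecE n (e + 1) ℓ (v (Fin.last K)) (n ^ ℓ * h) =
      v (Fin.last K) h := by
    intro h
    have h1 : (n ^ ℓ * h) / n ^ ℓ = h := Nat.mul_div_cancel_left _ hq
    unfold vecE
    simp only [h1, h.isLt, dite_true, Nat.mul_mod_right, if_true]
  constructor
  · rintro ⟨js, hj1, hj2⟩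
    refine ⟨js, fun i => by have := hj1 i; omega, ?_⟩
    rintro p hp ⟨hy, hx⟩
    have hpd : p / n ^ ℓ < e + 1 ∧ p % n ^ ℓ = 0 := by
      simp only [vecE] at hy
      split_ifs at hy with h1 h2
      exact ⟨h1, h2⟩
    have hpe : p = n ^ ℓ * ((⟨p / n ^ ℓ, hpd.1⟩ : Fin (e + 1)) : ℕ) := by
      have := Nat.div_add_mod p (n ^ ℓ)
      simp only
      omega
    generalize (⟨p / n ^ ℓ, hpd.1⟩ : Fin (e + 1)) = h at hpe
    subst hpe
    refine hj2 h ⟨?_, fun i => ?_⟩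
    · exact (hE h).symm.trans hy
    · have := hx i
      rw [hS i h _ (hj1 i), Bool.and_eq_true] at this
      exact this
  · rintro ⟨s, hs1, hs2⟩
    refine ⟨s, fun i => by have : s i ≤ f := hs1 i; omega, ?_⟩
    rintro h ⟨hy, hx⟩
    have hhe : n ^ ℓ * (h : ℕ) ≤ e * n ^ ℓ := by
      rw [mul_comm]; exact Nat.mul_le_mul_right _ (by omega)
    refine hs2 (n ^ ℓ * h) (by simp only [Nat.add_sub_cancel]; omega) ⟨?_, fun i => ?_⟩
    · exact (hE h).trans hy
    · rw [hS i h _ (by have : s i ≤ f := hs1 i; omega), Bool.and_eq_true]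
      exact hx i
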